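/- For every γ ∈ (1,2) and every N ≥ 1, τ(Â_γ) is symmetric positive definite and for every nonzero y ∈ ℝ^N one has (1/2)·yᵀ τ(Â_γ) y < yᵀ Â_γ y < (3/2)·yᵀ τ(Â_γ) y; consequently every eigenvalue of τ(Â_γ)^{−1} Â_γ lies strictly between 1/2 and 3/2. -/

import Mathlib

open Matrix

/-- The second-order coefficients `g_k^{(γ)}`. -/
noncomputable def gCoef (γ : ℝ) (k : ℤ) : ℝ :=
  (-1 : ℝ) ^ k * Real.Gamma (γ + 1) /
    (Real.Gamma (γ / 2 - k + 1) * Real.Gamma (γ / 2 + k + 1))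

/-- `Â_γ`: the symmetric Toeplitz matrix with `(i,j)` entry `g_{i-j}^{(γ)}`. -/
noncomputable def Ahat (γ : ℝ) (N : ℕ) : Matrix (Fin N) (Fin N) ℝ :=
  fun i j => gCoef γ ((i : ℤ) - (j : ℤ))

/-- τ part of the symmetric Toeplitz matrix with first column `t 0, …, t (N-1)`:
with 1-based indices `i, j ∈ {1,…,N}` (here `i.val + 1`, `j.val + 1`) and the
convention `t m = 0` for `m ≥ N`, the `(i,j)` entry is
`t |i-j| - t (i+j) - t (2(N+1)-i-j)`. -/
noncomputable def tauOf (N : ℕ) (t : ℕ → ℝ) : Matrix (Fin N) (Fin N) ℝ :=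
  fun i j =>
    (fun m => if m < N then t m else 0) ((i : ℤ) - (j : ℤ)).natAbs -
    (fun m => if m < N then t m else 0) (((i : ℕ) + 1) + ((j : ℕ) + 1)) -
    (fun m => if m < N then t m else 0) (2 * (N + 1) - ((i : ℕ) + 1) - ((j : ℕ) + 1))

/-- `τ(Â_γ)`. -/
noncomputable def tauAhat (γ : ℝ) (N : ℕ) : Matrix (Fin N) (Fin N) ℝ :=
  tauOf N (fun m => gCoef γ (m : ℤ))

/-- The tridiagonal matrix with `2` on the diagonal and `-1` on the sub/superdiagonals. -/
def triDiag (N : ℕ) : Matrix (Fin N) (Fin N) ℝ :=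
  fun i j =>
    if (i : ℤ) = (j : ℤ) then 2
    else if ((i : ℤ) - (j : ℤ)).natAbs = 1 then -1 else 0

/-- `Q_γ = I_N + (γ/24)·T_N`. -/
noncomputable def Qmat (γ : ℝ) (N : ℕ) : Matrix (Fin N) (Fin N) ℝ :=
  1 + (γ / 24) • triDiag N

/-- `P_γ = Q_γ · τ(Â_γ)`. -/
noncomputable def Pmat (γ : ℝ) (N : ℕ) : Matrix (Fin N) (Fin N) ℝ :=
  Qmat γ N * tauAhat γ N

theorem quad_pos {N : ℕ} (M : Matrix (Fin N) (Fin N) ℝ) (hM : ∀ i j, M i j = M j i)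
    (hd : ∀ i, ∑ j, (if i = j then 0 else |M i j|) < M i i)
    (y : Fin N → ℝ) (hy : y ≠ 0) : 0 < y ⬝ᵥ M *ᵥ y := by
  obtain ⟨i0, hi0⟩ := Function.ne_iff.mp hy
  have key : ∀ i j, (if i = j then M i i * y i ^ 2 else 0)
      - (if i = j then 0 else |M i j|) * (y i ^ 2 / 2)
      - (if j = i then 0 else |M j i|) * (y j ^ 2 / 2) ≤ y i * (M i j * y j) := by
    intro i j
    by_cases h : i = j
    · subst h
      simp
      nlinarith
    · have h' : ¬ j = i := fun e => h e.symm
      simp only [h, h', if_false, hM j i]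
      have h1 := abs_nonneg (M i j)
      rcases abs_cases (M i j) with ⟨h2, _⟩ | ⟨h2, _⟩
      · nlinarith [mul_nonneg h1 (sq_nonneg (y i + y j))]
      · nlinarith [mul_nonneg h1 (sq_nonneg (y i - y j))]
  have hsum : ∑ i, (M i i - ∑ j, (if i = j then 0 else |M i j|)) * y i ^ 2 ≤ y ⬝ᵥ M *ᵥ y := by
    have e : y ⬝ᵥ M *ᵥ y = ∑ i, ∑ j, y i * (M i j * y j) := by
      simp only [dotProduct, mulVec, Finset.mul_sum]
    rw [e]
    refine le_trans (le_of_eq ?_)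
      (Finset.sum_le_sum fun i _ => Finset.sum_le_sum fun j _ => key i j)
    simp only [Finset.sum_sub_distrib]
    rw [Finset.sum_comm (f := fun i j => (if j = i then 0 else |M j i|) * (y j ^ 2 / 2))]
    simp only [← Finset.sum_mul, Finset.sum_ite_eq, Finset.mem_univ, if_true]
    rw [← Finset.sum_sub_distrib, ← Finset.sum_sub_distrib]
    refine Finset.sum_congr rfl fun i _ => ?_
    ring
  refine lt_of_lt_of_le ?_ hsum
  refine Finset.sum_pos' (fun i _ => mul_nonneg (sub_nonneg.2 (hd i).le) (sq_nonneg _))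
    ⟨i0, Finset.mem_univ _, mul_pos (sub_pos.2 (hd i0)) ?_⟩
  have : y i0 ≠ 0 := hi0
  positivity

theorem part_sum (f : ℕ → ℝ) (hf : ∀ m, 0 ≤ f m) (i n : ℕ) (B : ℝ)
    (hB : ∀ M, ∑ m ∈ Finset.range M, f m < B) :
    ∑ m ∈ Finset.range i, f m + ∑ m ∈ Finset.range n, f (i + 1 + m) < B := by
  have h := hB (i + 1 + n)
  rw [Finset.sum_range_add, Finset.sum_range_succ] at h
  linarith [hf i]

/-- minus the Hankel correction -/
noncomputable def hankB (s : ℕ → ℝ) (N : ℕ) (i j : ℕ) : ℝ :=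
  (if i + j + 2 < N then s (i + j + 2) else 0) +
    (if 2 * (N + 1) - (i + 1) - (j + 1) < N then s (2 * (N + 1) - (i + 1) - (j + 1)) else 0)

theorem hankB_nonneg (s : ℕ → ℝ) (hs : ∀ m, 0 < m → 0 ≤ s m) (N i j : ℕ) (hi : i < N)
    (hj : j < N) : 0 ≤ hankB s N i j := by
  unfold hankB
  have h1 := hs (i + j + 2) (by omega)
  have h2 := hs (2 * (N + 1) - (i + 1) - (j + 1)) (by omega)
  split_ifs <;> linarith

theorem hankB_le (s : ℕ → ℝ) (hs : ∀ m, 0 < m → 0 ≤ s m)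
    (ha : ∀ m n, 0 < m → m ≤ n → s n ≤ s m) (N i j : ℕ) (hi : i < N)
    (hj : j < N) (hij : i ≠ j) : hankB s N i j ≤ s ((i : ℤ) - (j : ℤ)).natAbs := by
  unfold hankB
  have h0 := hs ((i : ℤ) - (j : ℤ)).natAbs (by omega)
  have h1 := ha ((i : ℤ) - (j : ℤ)).natAbs (i + j + 2) (by omega) (by omega)
  have h2 := ha ((i : ℤ) - (j : ℤ)).natAbs (2 * (N + 1) - (i + 1) - (j + 1)) (by omega) (by omega)
  split_ifs
  · omega
  all_goals linarith

theorem row_sum (s : ℕ → ℝ) (hs : ∀ m, 0 < m → 0 ≤ s m) (B : ℝ)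
    (hB : ∀ M, ∑ m ∈ Finset.range M, s (m + 1) < B) (N i : ℕ) (hi : i < N) :
    ∑ j ∈ Finset.range N, ((if i = j then 0 else s ((i : ℤ) - (j : ℤ)).natAbs) + hankB s N i j)
      < 2 * B := by
  have hf : ∀ m, 0 ≤ s (m + 1) := fun m => hs _ (by omega)
  have p1 := part_sum (fun m => s (m + 1)) hf i N B hB
  have p2 := part_sum (fun m => s (m + 1)) hf (N - 1 - i) N B hB
  have e1 : ∑ j ∈ Finset.range N, (if i = j then 0 else s ((i : ℤ) - (j : ℤ)).natAbs)
      = ∑ m ∈ Finset.range i, s (m + 1) + ∑ m ∈ Finset.range (N - 1 - i), s (m + 1) := by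
    have hN : N = i + 1 + (N - 1 - i) := by omega
    conv_lhs => rw [hN]
    rw [Finset.sum_range_add, Finset.sum_range_succ]
    simp only [if_true, add_zero]
    congr 1
    · rw [← Finset.sum_range_reflect (fun m => s (m + 1)) i]
      refine Finset.sum_congr rfl fun j hj => ?_
      have := Finset.mem_range.1 hj
      rw [if_neg (by omega)]
      congr 1
      omega
    · refine Finset.sum_congr rfl fun j hj => ?_
      rw [if_neg (by omega)]
      congr 1
      omega
  have e2 : ∑ j ∈ Finset.range N, hankB s N i j ≤
      ∑ m ∈ Finset.range N, s (i + 1 + m + 1) + ∑ m ∈ Finset.range N, s (N - 1 - i + 1 + m + 1) := by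
    rw [← Finset.sum_range_reflect (fun m => s (N - 1 - i + 1 + m + 1)) N, ← Finset.sum_add_distrib]
    refine Finset.sum_le_sum fun j hj => ?_
    have hj := Finset.mem_range.1 hj
    unfold hankB
    have a1 : i + 1 + j + 1 = i + j + 2 := by omega
    have a2 : N - 1 - i + 1 + (N - 1 - j) + 1 = 2 * (N + 1) - (i + 1) - (j + 1) - 0 := by omega
    have h1 := hs (i + j + 2) (by omega)
    have h2 := hs (2 * (N + 1) - (i + 1) - (j + 1)) (by omega)
    rw [a1, a2, Nat.sub_zero]
    split_ifs <;> linarith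
  rw [Finset.sum_add_distrib, e1]
  linarith

theorem gCoef_neg (γ : ℝ) (k : ℤ) : gCoef γ (-k) = gCoef γ k := by
  unfold gCoef
  rw [_root_.zpow_neg, ← _root_.inv_zpow]
  push_cast
  rw [sub_neg_eq_add, ← sub_eq_add_neg, mul_comm (Real.Gamma (γ / 2 + k + 1))]
  norm_num

theorem gCoef_natAbs (γ : ℝ) (k : ℤ) : gCoef γ (k.natAbs : ℤ) = gCoef γ k := by
  rcases Int.natAbs_eq k with h | h
  · rw [← h]
  · conv_rhs => rw [h]
    rw [gCoef_neg]

theorem gCoef_zero_pos (γ : ℝ) (hγ : γ ∈ Set.Ioo (1 : ℝ) 2) : 0 < gCoef γ 0 := by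
  obtain ⟨h1, h2⟩ := hγ
  unfold gCoef
  have a := Real.Gamma_pos_of_pos (show 0 < γ + 1 by linarith)
  have b := Real.Gamma_pos_of_pos (show 0 < γ / 2 + 1 by linarith)
  simp
  positivity

theorem gCoef_rec (γ : ℝ) (hγ : γ ∈ Set.Ioo (1 : ℝ) 2) (k : ℕ) :
    gCoef γ ((k + 1 : ℕ) : ℤ) = (k - γ / 2) / (k + 1 + γ / 2) * gCoef γ (k : ℤ) := by
  obtain ⟨h1, h2⟩ := hγ
  have hne : ∀ m : ℤ, γ / 2 ≠ m := by
    intro m h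
    have h3 : (0 : ℝ) < m := by linarith
    have h4 : (m : ℝ) < 1 := by linarith
    have h3' : (0 : ℤ) < m := by exact_mod_cast h3
    have h4' : (m : ℤ) < 1 := by exact_mod_cast h4
    omega
  unfold gCoef
  have hk : (0 : ℝ) ≤ k := Nat.cast_nonneg k
  have d1 : γ / 2 - k ≠ 0 := by
    have := hne k
    push_cast at this
    exact sub_ne_zero.2 this
  have d2 : γ / 2 + k + 1 ≠ 0 := by positivity
  have e1 : Real.Gamma (γ / 2 - k + 1) = (γ / 2 - k) * Real.Gamma (γ / 2 - k) :=
    Real.Gamma_add_one d1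
  have e2 : Real.Gamma (γ / 2 + k + 1 + 1) = (γ / 2 + k + 1) * Real.Gamma (γ / 2 + k + 1) :=
    Real.Gamma_add_one d2
  have g1 : Real.Gamma (γ / 2 - k) ≠ 0 := by
    apply Real.Gamma_ne_zero
    intro m h
    apply hne (k - m)
    push_cast
    linarith
  have g2 : Real.Gamma (γ / 2 + k + 1) ≠ 0 :=
    (Real.Gamma_pos_of_pos (by positivity)).ne'
  push_cast
  rw [show γ / 2 - (k + 1 : ℝ) + 1 = γ / 2 - k by ring,
    show γ / 2 + (k + 1 : ℝ) + 1 = γ / 2 + k + 1 + 1 by ring, e1, e2,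
    zpow_add₀ (by norm_num), show (k + 1 + γ / 2 : ℝ) = γ / 2 + k + 1 by ring]
  generalize Real.Gamma (γ / 2 + k + 1) = x at *
  generalize Real.Gamma (γ / 2 - k) = z at *
  generalize hd : γ / 2 + k + 1 = d at *
  rw [show (k : ℝ) - γ / 2 = -(γ / 2 - k) by ring]
  generalize γ / 2 - k = c at *
  field_simp

theorem gCoef_succ_neg (γ : ℝ) (hγ : γ ∈ Set.Ioo (1 : ℝ) 2) (k : ℕ) :
    gCoef γ ((k + 1 : ℕ) : ℤ) < 0 := by
  have hγ' := hγ
  obtain ⟨h1, h2⟩ := hγ'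
  induction k with
  | zero =>
    rw [gCoef_rec γ hγ]
    apply mul_neg_of_neg_of_pos _ (by exact_mod_cast gCoef_zero_pos γ hγ)
    apply div_neg_of_neg_of_pos <;> norm_num <;> linarith
  | succ k ih =>
    rw [gCoef_rec γ hγ]
    refine mul_neg_of_pos_of_neg ?_ ih
    have hk : (0 : ℝ) ≤ k := Nat.cast_nonneg k
    apply div_pos <;> push_cast <;> linarith

theorem gCoef_mono (γ : ℝ) (hγ : γ ∈ Set.Ioo (1 : ℝ) 2) :
    Monotone (fun k : ℕ => gCoef γ ((k + 1 : ℕ) : ℤ)) := by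
  refine monotone_nat_of_le_succ fun k => ?_
  have h := gCoef_succ_neg γ hγ k
  have hr := gCoef_rec γ hγ (k + 1)
  obtain ⟨h1, h2⟩ := hγ
  have hk : (0 : ℝ) ≤ k := Nat.cast_nonneg k
  show gCoef γ ((k + 1 : ℕ) : ℤ) ≤ gCoef γ ((k + 1 + 1 : ℕ) : ℤ)
  rw [hr]
  have : ((k + 1 : ℕ) - γ / 2) / ((k + 1 : ℕ) + 1 + γ / 2) ≤ 1 := by
    rw [div_le_one (by positivity)]
    linarith
  nlinarith

theorem gCoef_sum (γ : ℝ) (hγ : γ ∈ Set.Ioo (1 : ℝ) 2) (M : ℕ) :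
    gCoef γ 0 + 2 * ∑ m ∈ Finset.range M, gCoef γ ((m + 1 : ℕ) : ℤ)
      = -(M + 1 + γ / 2) / (γ / 2) * gCoef γ ((M + 1 : ℕ) : ℤ) := by
  obtain ⟨h1, h2⟩ := id hγ
  induction M with
  | zero =>
    rw [gCoef_rec γ hγ]
    simp
    field_simp
    ring
  | succ k ih =>
    rw [Finset.sum_range_succ, mul_add, ← add_assoc, ih, gCoef_rec γ hγ (k + 1)]
    have hk : (0 : ℝ) ≤ k := Nat.cast_nonneg k
    have : (k + 1 + 1 + γ / 2 : ℝ) ≠ 0 := by positivity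
    push_cast
    field_simp
    ring

theorem gCoef_sum_lt (γ : ℝ) (hγ : γ ∈ Set.Ioo (1 : ℝ) 2) (M : ℕ) :
    ∑ m ∈ Finset.range M, -gCoef γ ((m + 1 : ℕ) : ℤ) < gCoef γ 0 / 2 := by
  have h := gCoef_sum γ hγ M
  have hn := gCoef_succ_neg γ hγ M
  obtain ⟨h1, h2⟩ := hγ
  have : 0 < -(M + 1 + γ / 2) / (γ / 2) * gCoef γ ((M + 1 : ℕ) : ℤ) := by
    apply mul_pos_of_neg_of_neg _ hn
    apply div_neg_of_neg_of_pos
    · have hk : (0 : ℝ) ≤ M := Nat.cast_nonneg M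
      linarith
    · linarith
  rw [Finset.sum_neg_distrib]
  linarith

theorem tau_entry (γ : ℝ) (N : ℕ) (i j : Fin N) :
    tauAhat γ N i j = Ahat γ N i j + hankB (fun m => -gCoef γ (m : ℤ)) N i j := by
  have hi := i.2
  have hj := j.2
  have h1 : ((i : ℤ) - (j : ℤ)).natAbs < N := by omega
  have h2 : (i : ℕ) + 1 + ((j : ℕ) + 1) = i + j + 2 := by ring
  simp only [tauAhat, tauOf, Ahat, hankB, h1, if_true, gCoef_natAbs, h2]
  split_ifs <;> ring

theorem hankB_symm (s : ℕ → ℝ) (N i j : ℕ) : hankB s N i j = hankB s N j i := by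
  unfold hankB
  rw [add_comm i j, Nat.sub_right_comm]

theorem Ahat_symm (γ : ℝ) (N : ℕ) (i j : Fin N) : Ahat γ N i j = Ahat γ N j i := by
  unfold Ahat
  rw [← gCoef_neg, neg_sub]

theorem main_quad (γ : ℝ) (hγ : γ ∈ Set.Ioo (1 : ℝ) 2) (N : ℕ) (c : ℝ)
    (hc : c = -1 ∨ c = 3) (y : Fin N → ℝ) (hy : y ≠ 0) :
    0 < y ⬝ᵥ (Ahat γ N + c • (tauAhat γ N - Ahat γ N)) *ᵥ y := by
  set s : ℕ → ℝ := fun m => -gCoef γ (m : ℤ) with hsdef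
  have hent : ∀ i j, (Ahat γ N + c • (tauAhat γ N - Ahat γ N)) i j
      = Ahat γ N i j + c * hankB s N i j := by
    intro i j
    simp only [Matrix.add_apply, Matrix.smul_apply, Matrix.sub_apply, tau_entry, smul_eq_mul]
    ring
  have hs : ∀ m, 0 < m → 0 ≤ s m := by
    intro m hm
    obtain ⟨k, rfl⟩ := Nat.exists_eq_succ_of_ne_zero hm.ne'
    have := gCoef_succ_neg γ hγ k
    simp only [hsdef]
    exact neg_nonneg.2 this.le
  have ha : ∀ m n, 0 < m → m ≤ n → s n ≤ s m := by
    intro m n hm hmn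
    obtain ⟨k, rfl⟩ := Nat.exists_eq_succ_of_ne_zero hm.ne'
    obtain ⟨l, rfl⟩ := Nat.exists_eq_succ_of_ne_zero (show n ≠ 0 by omega)
    exact neg_le_neg (gCoef_mono γ hγ (by omega : k ≤ l))
  apply quad_pos _ _ _ y hy
  · intro i j
    rw [hent, hent, Ahat_symm, hankB_symm]
  · intro i
    have hr := row_sum s hs _ (gCoef_sum_lt γ hγ) N i i.2
    rw [← Fin.sum_univ_eq_sum_range
      (fun j => (if (i : ℕ) = j then 0 else s (((i : ℕ) : ℤ) - (j : ℤ)).natAbs) + hankB s N i j)] at hr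
    have hd : Ahat γ N i i = gCoef γ 0 := by simp [Ahat]
    have hb := fun j : Fin N => hankB_nonneg s hs N i j i.2 j.2
    have hle : ∑ j, (if i = j then 0 else |(Ahat γ N + c • (tauAhat γ N - Ahat γ N)) i j|)
        + hankB s N i i
        ≤ ∑ j : Fin N, ((if (i : ℕ) = j then 0 else s (((i : ℕ) : ℤ) - ((j : ℕ) : ℤ)).natAbs)
          + hankB s N i j) := by
      have e : hankB s N i i = ∑ j : Fin N, (if i = j then hankB s N i j else 0) := by simp
      rw [e, ← Finset.sum_add_distrib]
      refine Finset.sum_le_sum fun j _ => ?_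
      by_cases h : i = j
      · subst h
        simp
      · have h' : (i : ℕ) ≠ j := fun e => h (Fin.ext e)
        simp only [h, h', if_false, hent, add_zero]
        have b1 := hankB_le s hs ha N i j i.2 j.2 h'
        have b2 := hb j
        have b3 : Ahat γ N i j = - s (((i : ℕ) : ℤ) - ((j : ℕ) : ℤ)).natAbs := by
          simp only [hsdef, gCoef_natAbs, Ahat, neg_neg]
        rw [b3, abs_le]
        rcases hc with rfl | rfl <;> constructor <;> linarith
    rw [hent, hd]
    have := hb i
    rcases hc with rfl | rfl <;> linarith

theorem stmt_12 (γ : ℝ) (hγ : γ ∈ Set.Ioo (1 : ℝ) 2) (N : ℕ) (hN : 1 ≤ N) :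
    (tauAhat γ N).IsSymm ∧ (tauAhat γ N).PosDef ∧
    (∀ y : Fin N → ℝ, y ≠ 0 →
      (1 / 2) * (y ⬝ᵥ tauAhat γ N *ᵥ y) < y ⬝ᵥ Ahat γ N *ᵥ y ∧
      y ⬝ᵥ Ahat γ N *ᵥ y < (3 / 2) * (y ⬝ᵥ tauAhat γ N *ᵥ y)) ∧
    (∀ (μ : ℝ) (v : Fin N → ℝ), v ≠ 0 →
      ((tauAhat γ N)⁻¹ * Ahat γ N) *ᵥ v = μ • v → 1 / 2 < μ ∧ μ < 3 / 2) := by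
  have q1 := main_quad γ hγ N (-1) (Or.inl rfl)
  have q3 := main_quad γ hγ N 3 (Or.inr rfl)
  simp only [add_mulVec, smul_mulVec, sub_mulVec, dotProduct_add, dotProduct_smul,
    dotProduct_sub, smul_eq_mul] at q1 q3
  have hsym : (tauAhat γ N).IsSymm := by
    ext i j
    rw [transpose_apply, tau_entry, tau_entry, Ahat_symm, hankB_symm]
  have hpos : ∀ y : Fin N → ℝ, y ≠ 0 → 0 < y ⬝ᵥ tauAhat γ N *ᵥ y := by
    intro y hy
    linarith [q1 y hy, q3 y hy]
  have hquad : ∀ y : Fin N → ℝ, y ≠ 0 →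
      (1 / 2) * (y ⬝ᵥ tauAhat γ N *ᵥ y) < y ⬝ᵥ Ahat γ N *ᵥ y ∧
      y ⬝ᵥ Ahat γ N *ᵥ y < (3 / 2) * (y ⬝ᵥ tauAhat γ N *ᵥ y) := by
    intro y hy
    constructor <;> linarith [q1 y hy, q3 y hy]
  have hpd : (tauAhat γ N).PosDef := by
    refine Matrix.PosDef.of_dotProduct_mulVec_pos ?_ ?_
    · rw [Matrix.IsHermitian, conjTranspose_eq_transpose_of_trivial]
      exact hsym
    · intro y hy
      simpa using hpos y hy
  refine ⟨hsym, hpd, hquad, ?_⟩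
  intro μ v hv h
  have hdet : IsUnit (tauAhat γ N).det := hpd.det_pos.ne'.isUnit
  have h2 : Ahat γ N *ᵥ v = μ • (tauAhat γ N *ᵥ v) := by
    have := congrArg (fun w => tauAhat γ N *ᵥ w) h
    simpa [mulVec_mulVec, mul_nonsing_inv_cancel_left _ _ hdet, mulVec_smul] using this
  have h3 := hquad v hv
  rw [h2, dotProduct_smul, smul_eq_mul] at h3
  have hp := hpos v hv
  exact ⟨lt_of_mul_lt_mul_right h3.1 hp.le, lt_of_mul_lt_mul_right h3.2 hp.le⟩
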